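/- Let L1 = (S1, ι1, →1) and L2 = (S2, ι2, →2) be two LTSs. Then L1 ⊑fdr L2 (i.e., failures_⊥(L2) ⊆ failures_⊥(L1) and divergences(L2) ⊆ divergences(L1)) holds if and only if no FD-witness is reachable in the product norm_fdr(L1) ⋉ L2, where a product state (U, s) is an FD-witness iff no state of U diverges and at least one of the following holds: U = ∅; s is stable and refusals(s) ⊄ refusals(U); or s diverges. -/

import Mathlib

/-- A labelled transition system with states `S` and visible actions `Act`.
Transition labels are `Option Act`, where `none` plays the role of the
internal action τ and `some a` is the visible action `a ∈ Act`. -/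
structure LTS (S : Type*) (Act : Type*) where
  init : S
  tr : S → Option Act → S → Prop

namespace LTS

variable {S S₁ S₂ : Type*} {Act : Type*}

/-- The trace relation: `s ⟶ε t` iff `s = t`, and `s ⟶(σ a) t` iff
`s ⟶σ u` and `u —a→ t` for some `u`. -/
inductive Trace (L : LTS S Act) : S → List (Option Act) → S → Prop
  | nil (s : S) : Trace L s [] s
  | snoc {s u t : S} {σ : List (Option Act)} {a : Option Act} :
      Trace L s σ u → L.tr u a t → Trace L s (σ ++ [a]) t

/-- The weak transition relation `s ⇒ρ t` for `ρ ∈ Act*`. -/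
inductive Weak (L : LTS S Act) : S → List Act → S → Prop
  | refl (s : S) : Weak L s [] s
  | tau {s t : S} : L.tr s none t → Weak L s [] t
  | act {s t : S} {a : Act} : L.tr s (some a) t → Weak L s [a] t
  | comp {s u t : S} {ρ σ : List Act} :
      Weak L s ρ u → Weak L u σ t → Weak L s (ρ ++ σ) t

/-- A state is reachable iff some trace leads from the initial state to it. -/
def Reachable (L : LTS S Act) (s : S) : Prop := ∃ σ, L.Trace L.init σ s

/-- A state is stable iff it has no outgoing τ-transition. -/
def Stable (L : LTS S Act) (s : S) : Prop := ¬ ∃ t, L.tr s none t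

/-- A state diverges iff there is an infinite sequence of τ-transitions from it. -/
def Diverges (L : LTS S Act) (s : S) : Prop :=
  ∃ f : ℕ → S, f 0 = s ∧ ∀ n, L.tr (f n) none (f (n + 1))

/-- The weak traces of an LTS. -/
def weaktraces (L : LTS S Act) : Set (List Act) := {ρ | ∃ t, L.Weak L.init ρ t}

/-- The divergences of an LTS: all `ρ σ` such that `ι ⇒ρ t` for a diverging `t`. -/
def divergences (L : LTS S Act) : Set (List Act) :=
  {w | ∃ ρ σ : List Act, w = ρ ++ σ ∧ ∃ t, L.Weak L.init ρ t ∧ L.Diverges t}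

/-- The refusals of a (stable) state: all sets `X` of visible actions none of
which is enabled in `s`. -/
def refusals (L : LTS S Act) (s : S) : Set (Set Act) :=
  {X | ∀ a ∈ X, ¬ ∃ t, L.tr s (some a) t}

/-- The refusals of a set of states. -/
def refusalsSet (L : LTS S Act) (U : Set S) : Set (Set Act) :=
  {X | ∃ s ∈ U, L.Stable s ∧ X ∈ L.refusals s}

/-- The stable failures of an LTS. -/
def failures (L : LTS S Act) : Set (List Act × Set Act) :=
  {p | ∃ t, L.Weak L.init p.1 t ∧ L.Stable t ∧ p.2 ∈ L.refusals t}

/-- The failures with post-divergence details obscured. -/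
def failuresBot (L : LTS S Act) : Set (List Act × Set Act) :=
  L.failures ∪ {p | p.1 ∈ L.divergences}

/-- The normal form of an LTS. -/
def norm (L : LTS S Act) : LTS (Set S) Act where
  init := {s | L.Weak L.init [] s}
  tr U a V := ∃ b : Act, a = some b ∧ V = {t | ∃ s ∈ U, L.Weak s [b] t}

/-- The failures-divergences normal form of an LTS. -/
def normFdr (L : LTS S Act) : LTS (Set S) Act where
  init := {s | L.Weak L.init [] s}
  tr U a V := ∃ b : Act, a = some b ∧ (¬ ∃ s ∈ U, L.Diverges s) ∧
      V = {t | ∃ s ∈ U, L.Weak s [b] t}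

/-- The product of two LTSs. -/
def prod (L₁ : LTS S₁ Act) (L₂ : LTS S₂ Act) : LTS (S₁ × S₂) Act where
  init := (L₁.init, L₂.init)
  tr p a q :=
    (a = none ∧ q.1 = p.1 ∧ L₂.tr p.2 none q.2) ∨
    (∃ b : Act, a = some b ∧ L₁.tr p.1 (some b) q.1 ∧ L₂.tr p.2 (some b) q.2)

end LTS


/-- An FD-witness: no state of `U` diverges, and `U = ∅`, or `s` is stable and
some refusal of `s` is not a refusal of `U`, or `s` diverges. -/
def FDwitness {S₁ S₂ Act : Type*} (L₁ : LTS S₁ Act) (L₂ : LTS S₂ Act)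
    (p : Set S₁ × S₂) : Prop :=
  (¬ ∃ u ∈ p.1, L₁.Diverges u) ∧
    (p.1 = ∅ ∨ (L₂.Stable p.2 ∧ ¬ L₂.refusals p.2 ⊆ L₁.refusalsSet p.1) ∨
      L₂.Diverges p.2)

/-!
A trace of a product projects to a trace of each factor, the left one being visited only by the
visible actions; since every transition of the normal form collects the states weakly reachable by
one more visible action, a product state `(U, s)` without diverging state in `U` is reachable iff,
for some non-divergent weak trace `ρ` of the specification, `U` is the set of states it may be in
after `ρ` and `s` is a state the implementation may be in after `ρ`. On the other side, refinement
only constrains the states the implementation may reach by non-divergent traces `ρ` of the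
specification: they must not diverge, and the refusals of the stable ones must be refusals of the
specification after `ρ`. The two descriptions match up to the witnesses with `U = ∅`, which are
redundant: a state that does not diverge reaches a stable state, whose empty refusal requires a
state in `U`.
-/

namespace LTS

section Traces

variable {S : Type*} {Act : Type*} {L : LTS S Act} {s t : S}

theorem trace_nil_iff : L.Trace s [] t ↔ s = t := by
  refine ⟨fun h => ?_, fun h => h ▸ .nil s⟩
  generalize hw : ([] : List (Option Act)) = w at h
  cases h with
  | nil => rfl
  | snoc => simp at hw

theorem trace_concat_iff {σ : List (Option Act)} {a : Option Act} :
    L.Trace s (σ ++ [a]) t ↔ ∃ u, L.Trace s σ u ∧ L.tr u a t := by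
  refine ⟨fun h => ?_, fun ⟨u, hσ, ha⟩ => .snoc hσ ha⟩
  generalize hw : σ ++ [a] = w at h
  cases h with
  | nil => simp at hw
  | snoc hσ ha =>
    obtain ⟨rfl, rfl⟩ := List.append_singleton_inj.1 hw
    exact ⟨_, hσ, ha⟩

theorem trace_append_iff {σ₁ σ₂ : List (Option Act)} :
    L.Trace s (σ₁ ++ σ₂) t ↔ ∃ u, L.Trace s σ₁ u ∧ L.Trace u σ₂ t := by
  induction σ₂ using List.reverseRecOn generalizing t with
  | nil => simp [trace_nil_iff]
  | append_singleton σ₂ a ih =>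
    simp only [← List.append_assoc, trace_concat_iff, ih]
    tauto

theorem trace_singleton_iff {a : Option Act} : L.Trace s [a] t ↔ L.tr s a t := by
  simpa [trace_nil_iff] using trace_concat_iff (L := L) (s := s) (t := t) (σ := []) (a := a)

theorem Trace.weak {σ : List (Option Act)} (h : L.Trace s σ t) : L.Weak s σ.reduceOption t := by
  induction h with
  | nil => exact .refl _
  | @snoc _ _ σ a _ ha ih =>
    rw [List.reduceOption_append]
    cases a with
    | none => exact ih.comp (.tau ha)
    | some a => exact ih.comp (.act ha)

theorem weak_iff_exists_trace {ρ : List Act} :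
    L.Weak s ρ t ↔ ∃ σ : List (Option Act), σ.reduceOption = ρ ∧ L.Trace s σ t := by
  refine ⟨fun h => ?_, fun ⟨σ, hσ, h⟩ => hσ ▸ h.weak⟩
  induction h with
  | refl => exact ⟨[], rfl, .nil _⟩
  | tau h => exact ⟨[none], rfl, trace_singleton_iff.2 h⟩
  | act h => exact ⟨[some _], rfl, trace_singleton_iff.2 h⟩
  | comp _ _ ih₁ ih₂ =>
    obtain ⟨σ₁, rfl, h₁⟩ := ih₁
    obtain ⟨σ₂, rfl, h₂⟩ := ih₂
    exact ⟨σ₁ ++ σ₂, List.reduceOption_append σ₁ σ₂, trace_append_iff.2 ⟨_, h₁, h₂⟩⟩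

theorem weak_append_iff {ρ₁ ρ₂ : List Act} :
    L.Weak s (ρ₁ ++ ρ₂) t ↔ ∃ u, L.Weak s ρ₁ u ∧ L.Weak u ρ₂ t := by
  refine ⟨fun h => ?_, fun ⟨u, h₁, h₂⟩ => h₁.comp h₂⟩
  obtain ⟨σ, hσ, hst⟩ := weak_iff_exists_trace.1 h
  obtain ⟨σ₁, σ₂, rfl, rfl, rfl⟩ := (List.reduceOption_eq_append_iff σ ρ₁ ρ₂).1 hσ
  obtain ⟨u, h₁, h₂⟩ := trace_append_iff.1 hst
  exact ⟨u, h₁.weak, h₂.weak⟩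

theorem diverges_iff_not_acc : L.Diverges s ↔ ¬ Acc (fun v u => L.tr u none v) s :=
  (not_acc_iff_exists_descending_chain (r := fun v u => L.tr u none v)).symm

theorem exists_stable_of_not_diverges (h : ¬ L.Diverges s) : ∃ t, L.Weak s [] t ∧ L.Stable t := by
  rw [diverges_iff_not_acc, not_not] at h
  induction h with
  | intro s _ ih =>
    by_cases hs : L.Stable s
    · exact ⟨s, .refl s, hs⟩
    · obtain ⟨u, hu⟩ := not_not.1 hs
      obtain ⟨t, hut, ht⟩ := ih u hu
      exact ⟨t, (Weak.tau hu).comp hut, ht⟩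

end Traces

section Divergences

variable {S : Type*} {Act : Type*} {L : LTS S Act} {ρ : List Act}

/-- The set of states in which `L` may be after performing the visible actions `ρ`, that is,
the states `t` with `ι ⇒ρ t`. -/
def after (L : LTS S Act) (ρ : List Act) : Set S := {t | L.Weak L.init ρ t}

theorem after_concat (a : Act) : L.after (ρ ++ [a]) = {t | ∃ s ∈ L.after ρ, L.Weak s [a] t} :=
  Set.ext fun _ => weak_append_iff

theorem exists_stable_mem_after {s : S} (hs : s ∈ L.after ρ) (hdiv : ¬ L.Diverges s) :
    ∃ t ∈ L.after ρ, L.Stable t := by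
  obtain ⟨t, hst, ht⟩ := exists_stable_of_not_diverges hdiv
  have hmem : L.Weak L.init (ρ ++ []) t := hs.comp hst
  exact ⟨t, List.append_nil ρ ▸ hmem, ht⟩

theorem mem_divergences_iff :
    ρ ∈ L.divergences ↔ ∃ ρ', ρ' <+: ρ ∧ ∃ t ∈ L.after ρ', L.Diverges t :=
  ⟨fun ⟨ρ', σ, h, ht⟩ => ⟨ρ', ⟨σ, h.symm⟩, ht⟩, fun ⟨ρ', ⟨σ, h⟩, ht⟩ => ⟨ρ', σ, h.symm, ht⟩⟩

theorem nil_mem_divergences_iff : [] ∈ L.divergences ↔ ∃ t ∈ L.after [], L.Diverges t := by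
  simp [mem_divergences_iff]

theorem concat_mem_divergences_iff {a : Act} :
    ρ ++ [a] ∈ L.divergences ↔
      ρ ∈ L.divergences ∨ ∃ t ∈ L.after (ρ ++ [a]), L.Diverges t := by
  simp only [mem_divergences_iff, List.prefix_concat_iff, or_and_right, exists_or,
    exists_eq_left, or_comm]

theorem mem_divergences_of_diverges {t : S} (ht : t ∈ L.after ρ) (hdiv : L.Diverges t) :
    ρ ∈ L.divergences :=
  mem_divergences_iff.2 ⟨ρ, List.prefix_rfl, t, ht, hdiv⟩

theorem mem_divergences_of_prefix {ρ' : List Act} (h : ρ' ∈ L.divergences) (hρ : ρ' <+: ρ) :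
    ρ ∈ L.divergences := by
  obtain ⟨ρ₀, hρ₀, ht⟩ := mem_divergences_iff.1 h
  exact mem_divergences_iff.2 ⟨ρ₀, hρ₀.trans hρ, ht⟩

end Divergences

section Refinement

variable {S₁ S₂ : Type*} {Act : Type*} {L₁ : LTS S₁ Act} {L₂ : LTS S₂ Act}

theorem divergences_subset_divergences_iff :
    L₂.divergences ⊆ L₁.divergences ↔
      ∀ ρ ∉ L₁.divergences, ∀ s ∈ L₂.after ρ, ¬ L₂.Diverges s := by
  refine ⟨fun h ρ hρ s hs hdiv => hρ (h (mem_divergences_of_diverges hs hdiv)), fun h ρ hρ => ?_⟩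
  obtain ⟨ρ', hρ', s, hs, hdiv⟩ := mem_divergences_iff.1 hρ
  have hmem : ρ' ∈ L₁.divergences := by_contra fun hρ' => h ρ' hρ' s hs hdiv
  exact mem_divergences_of_prefix hmem hρ'

theorem failuresBot_subset_failuresBot_iff (hdiv : L₂.divergences ⊆ L₁.divergences) :
    L₂.failuresBot ⊆ L₁.failuresBot ↔
      ∀ ρ ∉ L₁.divergences, ∀ s ∈ L₂.after ρ, L₂.Stable s →
        L₂.refusals s ⊆ L₁.refusalsSet (L₁.after ρ) := by
  constructor
  · intro h ρ hρ s hs hstable X hX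
    have hmem : (ρ, X) ∈ L₁.failuresBot := h (.inl ⟨s, hs, hstable, hX⟩)
    exact hmem.resolve_right hρ
  · rintro h ⟨ρ, X⟩ (⟨s, hs, hstable, hX⟩ | hρ)
    · by_cases hρ : ρ ∈ L₁.divergences
      · exact .inr hρ
      · exact .inl (h ρ hρ s hs hstable hX)
    · exact .inr (hdiv hρ)

end Refinement

section Product

variable {S S₁ S₂ : Type*} {Act : Type*}

theorem prod_tr_none_iff {L₁ : LTS S₁ Act} {L₂ : LTS S₂ Act} {p q : S₁ × S₂} :
    (L₁.prod L₂).tr p none q ↔ q.1 = p.1 ∧ L₂.tr p.2 none q.2 := by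
  simp [prod]

theorem prod_tr_some_iff {L₁ : LTS S₁ Act} {L₂ : LTS S₂ Act} {p q : S₁ × S₂} {a : Act} :
    (L₁.prod L₂).tr p (some a) q ↔ L₁.tr p.1 (some a) q.1 ∧ L₂.tr p.2 (some a) q.2 := by
  simp [prod]

theorem trace_prod_iff {L₁ : LTS S₁ Act} {L₂ : LTS S₂ Act} {σ : List (Option Act)}
    {p q : S₁ × S₂} :
    (L₁.prod L₂).Trace p σ q ↔
      L₁.Trace p.1 (σ.reduceOption.map some) q.1 ∧ L₂.Trace p.2 σ q.2 := by
  induction σ using List.reverseRecOn generalizing q with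
  | nil => simp only [List.reduceOption_nil, List.map_nil, trace_nil_iff, Prod.ext_iff]
  | append_singleton σ a ih =>
    cases a with
    | none =>
      simp only [List.reduceOption_append, List.reduceOption_singleton, Option.toList_none,
        List.append_nil, trace_concat_iff, ih, prod_tr_none_iff, Prod.exists]
      grind
    | some a =>
      simp only [List.reduceOption_append, List.reduceOption_singleton, Option.toList_some,
        List.map_append, List.map_singleton, trace_concat_iff, ih, prod_tr_some_iff, Prod.exists]
      grind

theorem reachable_prod_iff {L₁ : LTS S₁ Act} {L₂ : LTS S₂ Act} {p : S₁ × S₂} :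
    (L₁.prod L₂).Reachable p ↔
      ∃ ρ : List Act, L₁.Trace L₁.init (ρ.map some) p.1 ∧ p.2 ∈ L₂.after ρ := by
  constructor
  · rintro ⟨σ, h⟩
    obtain ⟨h₁, h₂⟩ := trace_prod_iff.1 h
    exact ⟨σ.reduceOption, h₁, h₂.weak⟩
  · rintro ⟨ρ, h₁, hafter⟩
    obtain ⟨σ, rfl, h₂⟩ := weak_iff_exists_trace.1 hafter
    exact ⟨σ, trace_prod_iff.2 ⟨h₁, h₂⟩⟩

theorem normFdr_tr_some_iff {L : LTS S Act} {a : Act} {U V : Set S} :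
    L.normFdr.tr U (some a) V ↔
      (¬ ∃ s ∈ U, L.Diverges s) ∧ V = {t | ∃ s ∈ U, L.Weak s [a] t} := by
  simp [normFdr]

-- Non-divergence of `U` belongs to the equivalence because the normal form only blocks transitions
-- out of divergent sets: a trace may still end in one.
theorem trace_normFdr_and_not_diverges_iff {L : LTS S Act} {ρ : List Act} {U : Set S} :
    (L.normFdr.Trace L.normFdr.init (ρ.map some) U ∧ ¬ ∃ u ∈ U, L.Diverges u) ↔
      U = L.after ρ ∧ ρ ∉ L.divergences := by
  induction ρ using List.reverseRecOn generalizing U with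
  | nil =>
    rw [List.map_nil, trace_nil_iff, eq_comm, nil_mem_divergences_iff]
    exact and_congr_right fun hU => hU ▸ Iff.rfl
  | append_singleton ρ a ih =>
    have hstep : L.normFdr.Trace L.normFdr.init ((ρ ++ [a]).map some) U ↔
        U = L.after (ρ ++ [a]) ∧ ρ ∉ L.divergences := by
      calc L.normFdr.Trace L.normFdr.init ((ρ ++ [a]).map some) U
        _ ↔ ∃ V, (L.normFdr.Trace L.normFdr.init (ρ.map some) V ∧ ¬ ∃ v ∈ V, L.Diverges v) ∧
              U = {t | ∃ s ∈ V, L.Weak s [a] t} := by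
            simp only [List.map_append, List.map_singleton, trace_concat_iff,
              normFdr_tr_some_iff, and_assoc]
        _ ↔ U = L.after (ρ ++ [a]) ∧ ρ ∉ L.divergences := by
            simp only [ih, and_assoc, exists_eq_left, after_concat]
            rw [and_comm]
    rw [hstep, concat_mem_divergences_iff, not_or, and_assoc]
    exact and_congr_right fun hU => hU ▸ Iff.rfl

theorem reachable_normFdr_prod_and_not_diverges_iff {L₁ : LTS S₁ Act} {L₂ : LTS S₂ Act}
    {p : Set S₁ × S₂} :
    ((L₁.normFdr.prod L₂).Reachable p ∧ ¬ ∃ u ∈ p.1, L₁.Diverges u) ↔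
      ∃ ρ ∉ L₁.divergences, p.1 = L₁.after ρ ∧ p.2 ∈ L₂.after ρ := by
  rw [reachable_prod_iff, ← exists_and_right]
  refine exists_congr fun ρ => ?_
  rw [and_right_comm, trace_normFdr_and_not_diverges_iff]
  tauto

end Product

section Witness

variable {S₁ S₂ : Type*} {Act : Type*} {L₁ : LTS S₁ Act} {L₂ : LTS S₂ Act}

theorem exists_reachable_fdwitness_iff :
    (∃ p : Set S₁ × S₂, (L₁.normFdr.prod L₂).Reachable p ∧ FDwitness L₁ L₂ p) ↔
      ∃ ρ ∉ L₁.divergences, ∃ s ∈ L₂.after ρ, L₁.after ρ = ∅ ∨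
        (L₂.Stable s ∧ ¬ L₂.refusals s ⊆ L₁.refusalsSet (L₁.after ρ)) ∨ L₂.Diverges s := by
  constructor
  · rintro ⟨⟨U, s⟩, hreach, hnd, hw⟩
    obtain ⟨ρ, hρ, hU, hs⟩ := reachable_normFdr_prod_and_not_diverges_iff.1 ⟨hreach, hnd⟩
    obtain rfl : U = L₁.after ρ := hU
    exact ⟨ρ, hρ, s, hs, hw⟩
  · rintro ⟨ρ, hρ, s, hs, hw⟩
    obtain ⟨hreach, hnd⟩ := reachable_normFdr_prod_and_not_diverges_iff
      (p := (L₁.after ρ, s)).2 ⟨ρ, hρ, rfl, hs⟩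
    exact ⟨_, hreach, hnd, hw⟩

theorem after_nonempty_of_refusals_subset {ρ : List Act} {s : S₂} (hs : s ∈ L₂.after ρ)
    (hdiv : ¬ L₂.Diverges s)
    (href : ∀ t ∈ L₂.after ρ, L₂.Stable t → L₂.refusals t ⊆ L₁.refusalsSet (L₁.after ρ)) :
    (L₁.after ρ).Nonempty := by
  obtain ⟨t, ht, hstable⟩ := exists_stable_mem_after hs hdiv
  have hempty : ∅ ∈ L₂.refusals t := fun a ha => ha.elim
  obtain ⟨u, hu, -⟩ := href t ht hstable hempty
  exact ⟨u, hu⟩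

end Witness

end LTS

/-- failures-divergences refinement holds iff no FD-witness is
reachable in the product of the failures-divergences normal form of the
specification and the implementation. -/
theorem failures_divergences_refinement_iff {S₁ S₂ Act : Type*}
    (L₁ : LTS S₁ Act) (L₂ : LTS S₂ Act) :
    (L₂.failuresBot ⊆ L₁.failuresBot ∧ L₂.divergences ⊆ L₁.divergences) ↔
      ¬ ∃ p : Set S₁ × S₂, ((L₁.normFdr).prod L₂).Reachable p ∧ FDwitness L₁ L₂ p := by
  rw [LTS.exists_reachable_fdwitness_iff, and_comm,
    and_congr_right LTS.failuresBot_subset_failuresBot_iff,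
    LTS.divergences_subset_divergences_iff]
  constructor
  · rintro ⟨hdiv, href⟩ ⟨ρ, hρ, s, hs, hempty | ⟨hstable, hnot⟩ | hs_div⟩
    · have hne := LTS.after_nonempty_of_refusals_subset hs (hdiv ρ hρ s hs) (href ρ hρ)
      exact hne.ne_empty hempty
    · exact hnot (href ρ hρ s hs hstable)
    · exact hdiv ρ hρ s hs hs_div
  · intro hno
    refine ⟨fun ρ hρ s hs hs_div => hno ⟨ρ, hρ, s, hs, .inr (.inr hs_div)⟩,
      fun ρ hρ s hs hstable => ?_⟩
    by_contra hnot
    exact hno ⟨ρ, hρ, s, hs, .inr (.inl ⟨hstable, hnot⟩)⟩
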